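/- arXiv:1510.00354 — 7 statements merged into one kernel-verified Lean document; each statement's English description precedes it below -/
import Mathlib

section
/- Let k ≥ 3 and i be integers with 1 ≤ i < k, and let t ∈ [0,1] be a real number. Then there exists a sequence (f_v)_{v ∈ ℕ}, where f_v is a k-uniform hypergraph property on v vertices, together with constants C, c', C' > 0 and v₀ ∈ ℕ, such that for all v ≥ v₀: s⁰(f_v) ≤ C · v^{i(1−t)} and c' · v^{k−i(1−t)} ≤ s¹(f_v) ≤ C' · v^{k−i(1−t)} (so s(f_v) = max{O(v^{i(1−t)}), Θ(v^{k−i(1−t)})}). -/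
open Finset

/-- The coordinate set: `k`-element subsets of `Fin v`. -/
abbrev KSet (v k : ℕ) : Type := {S : Finset (Fin v) // S.card = k}

/-- A `k`-uniform hypergraph on `Fin v`: a Boolean function on `k`-sets. -/
abbrev HGraph (v k : ℕ) : Type := KSet v k → Bool

/-- Sensitivity of `f` at input `x`: the number of coordinates whose flip changes `f`. -/
def localSens {I : Type} [Fintype I] [DecidableEq I]
    (f : (I → Bool) → Bool) (x : I → Bool) : ℕ :=
  (Finset.univ.filter fun i => f (Function.update x i (!x i)) ≠ f x).card

/-- Sensitivity of `f`: maximum of `localSens f x` over all inputs `x`. -/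
def sens {I : Type} [Fintype I] [DecidableEq I] (f : (I → Bool) → Bool) : ℕ :=
  Finset.univ.sup (localSens f)

/-- `sensOn b f` is `s^b(f)`: max sensitivity over inputs with `f x = b`. -/
def sensOn {I : Type} [Fintype I] [DecidableEq I] (b : Bool) (f : (I → Bool) → Bool) : ℕ :=
  (Finset.univ.filter fun x => f x = b).sup (localSens f)

/-- Flip all the coordinates of `x` in the block `B`. -/
def flipBlock {I : Type} [DecidableEq I] (x : I → Bool) (B : Finset I) : I → Bool :=
  fun i => if i ∈ B then !x i else x i

/-- Block sensitivity of `f` at `x`: maximum number of pairwise disjoint sensitive blocks. -/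
noncomputable def localBlockSens {I : Type} [Fintype I] [DecidableEq I]
    (f : (I → Bool) → Bool) (x : I → Bool) : ℕ :=
  sSup {n : ℕ | ∃ B : Fin n → Finset I,
    (∀ j, f (flipBlock x (B j)) ≠ f x) ∧
    ∀ j j', j ≠ j' → Disjoint (B j) (B j')}

/-- Block sensitivity of `f`. -/
noncomputable def blockSens {I : Type} [Fintype I] [DecidableEq I]
    (f : (I → Bool) → Bool) : ℕ :=
  Finset.univ.sup (localBlockSens f)

/-- Image of a `k`-set under a permutation of the vertices. -/
def permKSet {v k : ℕ} (σ : Equiv.Perm (Fin v)) (S : KSet v k) : KSet v k :=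
  ⟨S.1.map σ.toEmbedding, by rw [Finset.card_map]; exact S.2⟩

/-- A `k`-uniform hypergraph property: invariance under all vertex permutations,
where `(σ • G) S = G (σ⁻¹ S)`. -/
def IsHypergraphProperty {v k : ℕ} (f : HGraph v k → Bool) : Prop :=
  ∀ (σ : Equiv.Perm (Fin v)) (G : HGraph v k),
    f (fun S => G (permKSet σ⁻¹ S)) = f G

/-- `U` spans a complete hypergraph in `G`, and no other edge of `G` meets `U` in at least `i`
vertices. -/
def IsIsolatedClique {v k : ℕ} (i : ℕ) (G : HGraph v k) (U : Finset (Fin v)) : Prop :=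
  ∀ e : KSet v k, i ≤ (e.1 ∩ U).card → (G e = true ↔ e.1 ⊆ U)

open Classical in
/-- The property of containing an isolated clique on `m` vertices. -/
noncomputable def hasIsolatedClique {v k : ℕ} (i m : ℕ) (G : HGraph v k) : Bool :=
  decide (∃ U : Finset (Fin v), U.card = m ∧ IsIsolatedClique i G U)

theorem hasIsolatedClique_eq_true {v k i m : ℕ} {G : HGraph v k} :
    hasIsolatedClique i m G = true ↔
      ∃ U : Finset (Fin v), U.card = m ∧ IsIsolatedClique i G U := by
  simp [hasIsolatedClique]

theorem IsIsolatedClique.map {v k i : ℕ} {G : HGraph v k} {U : Finset (Fin v)}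
    (h : IsIsolatedClique i G U) (σ : Equiv.Perm (Fin v)) :
    IsIsolatedClique i (fun S => G (permKSet σ⁻¹ S)) (U.map σ.toEmbedding) := by
  intro e he
  have hmap : (e.1.map (σ⁻¹).toEmbedding).map σ.toEmbedding = e.1 := by
    ext x
    simp [Equiv.Perm.inv_def]
  have key := h (permKSet σ⁻¹ e)
  simp only [permKSet] at key ⊢
  rw [← hmap, ← Finset.map_inter, Finset.card_map] at he
  rw [key he]
  conv_rhs => rw [← hmap]
  rw [Finset.map_subset_map]

theorem permKSet_mul {v k : ℕ} (σ τ : Equiv.Perm (Fin v)) (S : KSet v k) :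
    permKSet σ (permKSet τ S) = permKSet (σ * τ) S := by
  apply Subtype.ext
  simp only [permKSet, Finset.map_map]
  rfl

theorem permKSet_one {v k : ℕ} (S : KSet v k) : permKSet 1 S = S :=
  Subtype.ext Finset.map_refl

theorem isHypergraphProperty_hasIsolatedClique (v k i m : ℕ) :
    IsHypergraphProperty (hasIsolatedClique i m : HGraph v k → Bool) := by
  have mono : ∀ (σ : Equiv.Perm (Fin v)) (G : HGraph v k), hasIsolatedClique i m G = true →
      hasIsolatedClique i m (fun S => G (permKSet σ⁻¹ S)) = true := by
    intro σ G h
    obtain ⟨U, hU, hG⟩ := hasIsolatedClique_eq_true.1 h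
    exact hasIsolatedClique_eq_true.2 ⟨_, by rw [Finset.card_map, hU], hG.map σ⟩
  intro σ G
  rw [Bool.eq_iff_iff]
  refine ⟨fun h => ?_, mono σ G⟩
  simpa [permKSet_mul, permKSet_one] using mono σ⁻¹ _ h

/-- If `U` and `U'` share at least `i` vertices and `U ⊄ U'`, then at least three `k`-sets lie
inside `U`, but not inside `U'`, and meet `U'` in at least `i` vertices. -/
theorem exists_conflicting_kSets {v k i : ℕ} (hik : i < k) (hi : 1 ≤ i) {U U' : Finset (Fin v)}
    (hU : k + 2 ≤ U.card) (hne : ¬ U ⊆ U') (hov : i ≤ (U ∩ U').card) :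
    ∃ F : Finset (KSet v k), 2 < F.card ∧
      ∀ d ∈ F, d.1 ⊆ U ∧ i ≤ (d.1 ∩ U').card ∧ ¬ d.1 ⊆ U' := by
  obtain ⟨x, hxU, hxU'⟩ := Finset.not_subset.1 hne
  obtain ⟨W, hW, hWc⟩ := Finset.exists_subset_card_eq hov
  have hxW : x ∉ W := fun h => hxU' (Finset.mem_inter.1 (hW h)).2
  have hins : insert x W ⊆ U :=
    Finset.insert_subset hxU (hW.trans Finset.inter_subset_left)
  obtain ⟨e, hWe, heU, hec⟩ := Finset.exists_subsuperset_card_eq hins (n := k)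
    (by rw [Finset.card_insert_of_notMem hxW]; omega) (by omega)
  have hxe : x ∈ e := hWe (Finset.mem_insert_self _ _)
  have hWe' : W ⊆ e ∩ U' := fun w hw =>
    Finset.mem_inter.2 ⟨hWe (Finset.mem_insert_of_mem hw), (Finset.mem_inter.1 (hW hw)).2⟩
  have hei : i ≤ (e ∩ U').card := hWc ▸ Finset.card_le_card hWe'
  obtain ⟨w, hw⟩ : (e ∩ U').Nonempty := Finset.card_pos.1 (by omega)
  have swap : ∀ y ∈ U \ e, ∃ d : KSet v k, (d.1 ⊆ U ∧ i ≤ (d.1 ∩ U').card ∧ ¬ d.1 ⊆ U') ∧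
      y ∈ d.1 ∧ d.1 ⊆ insert y e := by
    intro y hy
    obtain ⟨hyU, hye⟩ := Finset.mem_sdiff.1 hy
    have hcard : ∀ z ∈ e, (insert y (e.erase z)).card = k := by
      intro z hz
      rw [Finset.card_insert_of_notMem (fun h => hye (Finset.mem_of_mem_erase h)),
        Finset.card_erase_of_mem hz]
      omega
    have hsub : ∀ z, insert y (e.erase z) ⊆ U := fun z =>
      Finset.insert_subset hyU ((Finset.erase_subset _ _).trans heU)
    have hsub' : ∀ z, insert y (e.erase z) ⊆ insert y e := fun z =>
      Finset.insert_subset_insert _ (Finset.erase_subset _ _)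
    by_cases hyU' : y ∈ U'
    · have hwe := (Finset.mem_inter.1 hw).1
      have hwU' := (Finset.mem_inter.1 hw).2
      have hxw : x ≠ w := fun h => hxU' (h ▸ hwU')
      refine ⟨⟨_, hcard w hwe⟩, ⟨hsub w, ?_, ?_⟩, Finset.mem_insert_self _ _, hsub' w⟩
      · have heq : insert y (e.erase w) ∩ U' = insert y ((e ∩ U').erase w) := by
          rw [Finset.insert_inter_of_mem hyU', Finset.erase_inter]
        have hny : y ∉ (e ∩ U').erase w := fun h =>
          hye (Finset.mem_inter.1 (Finset.mem_of_mem_erase h)).1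
        simp only [heq]
        rw [Finset.card_insert_of_notMem hny, Finset.card_erase_of_mem hw]
        omega
      · exact fun h => hxU' (h (Finset.mem_insert_of_mem (Finset.mem_erase.2 ⟨hxw, hxe⟩)))
    · refine ⟨⟨_, hcard x hxe⟩, ⟨hsub x, ?_, fun h => hyU' (h (Finset.mem_insert_self _ _))⟩,
        Finset.mem_insert_self _ _, hsub' x⟩
      refine hei.trans (Finset.card_le_card fun z hz => ?_)
      obtain ⟨hze, hzU'⟩ := Finset.mem_inter.1 hz
      exact Finset.mem_inter.2 ⟨Finset.mem_insert_of_mem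
        (Finset.mem_erase.2 ⟨fun h => hxU' (h ▸ hzU'), hze⟩), hzU'⟩
  have hrest : 1 < (U \ e).card := by
    rw [Finset.card_sdiff_of_subset heU]
    omega
  obtain ⟨y₁, hy₁, y₂, hy₂, hy⟩ := Finset.one_lt_card.1 hrest
  obtain ⟨d₁, hd₁, hyd₁, hsub₁⟩ := swap y₁ hy₁
  obtain ⟨d₂, hd₂, hyd₂, -⟩ := swap y₂ hy₂
  have hy₂d₁ : y₂ ∉ d₁.1 := fun h => by
    rcases Finset.mem_insert.1 (hsub₁ h) with h | h
    · exact hy h.symm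
    · exact (Finset.mem_sdiff.1 hy₂).2 h
  refine ⟨{⟨e, hec⟩, d₁, d₂}, Finset.two_lt_card.2
    ⟨⟨e, hec⟩, by simp, d₁, by simp, d₂, by simp, ?_, ?_, ?_⟩, ?_⟩
  · rintro rfl
    exact (Finset.mem_sdiff.1 hy₁).2 hyd₁
  · rintro rfl
    exact (Finset.mem_sdiff.1 hy₂).2 hyd₂
  · rintro rfl
    exact hy₂d₁ hyd₂
  · intro d hd
    simp only [Finset.mem_insert, Finset.mem_singleton] at hd
    rcases hd with rfl | rfl | rfl
    · exact ⟨heU, hei, fun h => hxU' (h hxe)⟩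
    · exact hd₁
    · exact hd₂

/-- Isolated cliques of the same size in hypergraphs that agree outside two `k`-sets are equal as
soon as they share `i` vertices. -/
theorem IsIsolatedClique.eq_of_overlap {v k i m : ℕ} (hik : i < k) (hi : 1 ≤ i) (hm : k + 2 ≤ m)
    {G G' : HGraph v k} {U U' : Finset (Fin v)} {e e' : KSet v k}
    (hagree : ∀ d, d ≠ e → d ≠ e' → G d = G' d) (hU : U.card = m) (hU' : U'.card = m)
    (hG : IsIsolatedClique i G U) (hG' : IsIsolatedClique i G' U')
    (hov : i ≤ (U ∩ U').card) : U = U' := by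
  refine Finset.eq_of_subset_of_card_le ?_ (by omega)
  by_contra hne
  obtain ⟨F, hF, hFd⟩ := exists_conflicting_kSets hik hi (by omega) hne hov
  obtain ⟨d, hdF, hd⟩ := Finset.exists_mem_notMem_of_card_lt_card
    (lt_of_le_of_lt (Finset.card_le_two (a := e) (b := e')) hF)
  simp only [Finset.mem_insert, Finset.mem_singleton, not_or] at hd
  obtain ⟨hdU, hdi, hdU'⟩ := hFd d hdF
  have hcard : i ≤ (d.1 ∩ U).card := by
    rw [Finset.inter_eq_left.2 hdU, d.2]
    exact hik.le
  have htrue := (hG d hcard).2 hdU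
  rw [hagree d hd.1 hd.2] at htrue
  exact hdU' ((hG' d hdi).1 htrue)

theorem sensOn_false_mul_choose_le {v k i m : ℕ} (hik : i < k) (hi : 1 ≤ i) (hm : k + 2 ≤ m) :
    sensOn false (hasIsolatedClique i m : HGraph v k → Bool) * m.choose i ≤ v.choose i := by
  have hpos : 0 < m.choose i := Nat.choose_pos (by omega)
  rw [← Nat.le_div_iff_mul_le hpos]
  refine Finset.sup_le fun G hG => ?_
  rw [Nat.le_div_iff_mul_le hpos]
  replace hG : hasIsolatedClique i m G = false := (Finset.mem_filter.1 hG).2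
  unfold localSens
  set S := Finset.univ.filter fun e =>
    hasIsolatedClique i m (Function.update G e (!G e)) ≠ hasIsolatedClique i m G with hS
  have hex : ∀ e : KSet v k, ∃ U : Finset (Fin v), e ∈ S →
      U.card = m ∧ IsIsolatedClique i (Function.update G e (!G e)) U := by
    intro e
    by_cases he : e ∈ S
    · have h := (Finset.mem_filter.1 he).2
      rw [hG, ne_eq, Bool.not_eq_false] at h
      obtain ⟨U, hU⟩ := hasIsolatedClique_eq_true.1 h
      exact ⟨U, fun _ => hU⟩
    · exact ⟨∅, fun h => absurd h he⟩
  choose U hU using hex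
  have hoverlap : ∀ e ∈ S, ∀ e' ∈ S, e ≠ e' → (U e ∩ U e').card < i := by
    intro e he e' he' hne
    by_contra hov
    have heq : U e = U e' := IsIsolatedClique.eq_of_overlap (e := e) (e' := e') hik hi hm
      (fun d hd hd' => by simp [hd, hd']) (hU e he).1 (hU e' he').1 (hU e he).2 (hU e' he').2
      (by omega)
    -- otherwise the common clique would already be isolated in `G`
    have hGU : IsIsolatedClique i G (U e) := by
      intro d hd
      by_cases hde : d = e
      · have h := (hU e' he').2 d (heq ▸ hd)
        rw [Function.update_of_ne (hde ▸ hne), ← heq] at h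
        exact h
      · have h := (hU e he).2 d hd
        rwa [Function.update_of_ne hde] at h
    exact Bool.false_ne_true
      (hG.symm.trans (hasIsolatedClique_eq_true.2 ⟨U e, (hU e he).1, hGU⟩))
  have hdisj : ∀ e ∈ S, ∀ e' ∈ S, e ≠ e' →
      Disjoint ((U e).powersetCard i) ((U e').powersetCard i) := by
    intro e he e' he' hne
    rw [Finset.disjoint_left]
    intro W hW hW'
    rw [Finset.mem_powersetCard] at hW hW'
    have h := Finset.card_le_card (Finset.subset_inter hW.1 hW'.1)
    have := hoverlap e he e' he' hne
    omega
  calc S.card * m.choose i = ∑ e ∈ S, ((U e).powersetCard i).card := by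
        rw [Finset.sum_congr rfl fun e he => by rw [Finset.card_powersetCard, (hU e he).1]]
        simp
    _ = (S.biUnion fun e => (U e).powersetCard i).card := (Finset.card_biUnion hdisj).symm
    _ ≤ ((Finset.univ : Finset (Fin v)).powersetCard i).card :=
        Finset.card_le_card (Finset.biUnion_subset.2 fun e _ =>
          Finset.powersetCard_mono (Finset.subset_univ _))
    _ = v.choose i := by simp

/-- At most `choose m i * choose v (k - i)` sets of size `k` meet a given `m`-set in at least `i`
elements. -/
theorem card_kSet_inter_le {v k i : ℕ} (U : Finset (Fin v)) :
    (Finset.univ.filter fun e : KSet v k => i ≤ (e.1 ∩ U).card).card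
      ≤ U.card.choose i * v.choose (k - i) := by
  calc _ ≤ ((U.powersetCard i ×ˢ (Finset.univ : Finset (Fin v)).powersetCard (k - i)).image
          fun p => p.1 ∪ p.2).card := by
        refine Finset.card_le_card_of_injOn (fun e => e.1) ?_ Subtype.val_injective.injOn
        intro e he
        have he' : i ≤ (e.1 ∩ U).card := by simpa using he
        obtain ⟨W, hW, hWc⟩ := Finset.exists_subset_card_eq he'
        have hWe := hW.trans Finset.inter_subset_left
        refine Finset.mem_coe.2 (Finset.mem_image.2 ⟨(W, e.1 \ W), ?_, ?_⟩)
        · simp only [Finset.mem_product, Finset.mem_powersetCard]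
          refine ⟨⟨hW.trans Finset.inter_subset_right, hWc⟩, Finset.subset_univ _, ?_⟩
          rw [Finset.card_sdiff_of_subset hWe, hWc, e.2]
        · exact Finset.union_sdiff_of_subset hWe
    _ ≤ _ := Finset.card_image_le
    _ = _ := by simp [Finset.card_product]

/-- At least `choose m i * choose (v - m) (k - i)` sets of size `k` meet a given `m`-set in at
least `i` elements. -/
theorem le_card_kSet_inter {v k i : ℕ} (hik : i ≤ k) (U : Finset (Fin v)) :
    U.card.choose i * (v - U.card).choose (k - i)
      ≤ (Finset.univ.filter fun e : KSet v k => i ≤ (e.1 ∩ U).card).card := by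
  have hdisj : ∀ p ∈ U.powersetCard i ×ˢ Uᶜ.powersetCard (k - i), Disjoint p.1 p.2 := by
    intro p hp
    simp only [Finset.mem_product, Finset.mem_powersetCard] at hp
    exact Disjoint.mono hp.1.1 hp.2.1 disjoint_compl_right
  have hleft : ∀ p ∈ U.powersetCard i ×ˢ Uᶜ.powersetCard (k - i), (p.1 ∪ p.2) ∩ U = p.1 := by
    intro p hp
    simp only [Finset.mem_product, Finset.mem_powersetCard] at hp
    rw [Finset.union_inter_distrib_right, Finset.inter_eq_left.2 hp.1.1,
      Finset.disjoint_iff_inter_eq_empty.1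
        (Disjoint.mono_left hp.2.1 disjoint_compl_left), Finset.union_empty]
  calc U.card.choose i * (v - U.card).choose (k - i)
      = (U.powersetCard i ×ˢ Uᶜ.powersetCard (k - i)).card := by
        simp [Finset.card_product, Finset.card_compl]
    _ = ((U.powersetCard i ×ˢ Uᶜ.powersetCard (k - i)).image fun p => p.1 ∪ p.2).card := by
        refine (Finset.card_image_of_injOn ?_).symm
        intro p hp q hq hpq
        have hpq' : p.1 ∪ p.2 = q.1 ∪ q.2 := hpq
        have h1 : p.1 = q.1 := by rw [← hleft p hp, ← hleft q hq, hpq']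
        refine Prod.ext h1 ?_
        rw [← Finset.union_sdiff_cancel_left (hdisj p hp), hpq', h1,
          Finset.union_sdiff_cancel_left (hdisj q hq)]
    _ ≤ ((Finset.univ.filter fun e : KSet v k => i ≤ (e.1 ∩ U).card).image
          Subtype.val).card := by
        refine Finset.card_le_card (Finset.image_subset_iff.2 fun p hp => ?_)
        have hp' := hp
        simp only [Finset.mem_product, Finset.mem_powersetCard] at hp'
        refine Finset.mem_image.2 ⟨⟨p.1 ∪ p.2, ?_⟩, ?_, rfl⟩
        · rw [Finset.card_union_of_disjoint (hdisj p hp), hp'.1.2, hp'.2.2]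
          omega
        · simp only [Finset.mem_filter, Finset.mem_univ, true_and]
          rw [hleft p hp, hp'.1.2]
    _ ≤ _ := Finset.card_image_le

theorem sensOn_true_le {v k i m : ℕ} :
    sensOn true (hasIsolatedClique i m : HGraph v k → Bool)
      ≤ m.choose i * v.choose (k - i) := by
  refine Finset.sup_le fun G hG => ?_
  replace hG : hasIsolatedClique i m G = true := (Finset.mem_filter.1 hG).2
  obtain ⟨U, rfl, hGU⟩ := hasIsolatedClique_eq_true.1 hG
  refine le_trans (Finset.card_le_card fun e he => ?_) (card_kSet_inter_le U)
  simp only [Finset.mem_filter, Finset.mem_univ, true_and] at he ⊢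
  by_contra hlt
  refine he (Eq.trans (hasIsolatedClique_eq_true.2 ⟨U, rfl, fun d hd => ?_⟩) hG.symm)
  rw [Function.update_of_ne (by rintro rfl; exact hlt hd)]
  exact hGU d hd

theorem le_sensOn_true {v k i m : ℕ} (hik : i < k) (hi : 1 ≤ i) (hm : k + 2 ≤ m) (hmv : m ≤ v) :
    m.choose i * (v - m).choose (k - i)
      ≤ sensOn true (hasIsolatedClique i m : HGraph v k → Bool) := by
  obtain ⟨U, -, hU⟩ := Finset.exists_subset_card_eq
    (show m ≤ (Finset.univ : Finset (Fin v)).card by simpa using hmv)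
  let G : HGraph v k := fun e => decide (e.1 ⊆ U)
  have hGU : IsIsolatedClique i G U := fun e _ => by simp [G]
  have hG : hasIsolatedClique i m G = true := hasIsolatedClique_eq_true.2 ⟨U, hU, hGU⟩
  refine le_trans ?_ (Finset.le_sup (f := localSens _)
    (Finset.mem_filter.2 ⟨Finset.mem_univ G, hG⟩))
  have hcount := le_card_kSet_inter hik.le U
  rw [hU] at hcount
  refine hcount.trans (Finset.card_le_card fun e he => ?_)
  simp only [Finset.mem_filter, Finset.mem_univ, true_and] at he ⊢
  intro h
  obtain ⟨U', hU', hGU'⟩ := hasIsolatedClique_eq_true.1 (h.trans hG)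
  -- some `k`-subset of `U'` other than `e` is an edge of the flipped hypergraph
  have hkU' : 1 < (U'.powersetCard k).card := by
    rw [Finset.card_powersetCard, hU']
    exact lt_of_lt_of_le (by omega) (Nat.choose_le_choose k (show k + 1 ≤ m by omega) |>.trans'
      (Nat.choose_succ_self_right k).ge)
  obtain ⟨d, hd, hde⟩ := Finset.exists_mem_ne hkU' e.1
  obtain ⟨hdU', hdc⟩ := Finset.mem_powersetCard.1 hd
  have hdi : i ≤ (d ∩ U').card := by
    rw [Finset.inter_eq_left.2 hdU']
    omega
  have hdG := (hGU' ⟨d, hdc⟩ hdi).2 hdU'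
  rw [Function.update_of_ne (fun h => hde (congrArg Subtype.val h))] at hdG
  have hdU : d ⊆ U := of_decide_eq_true hdG
  have hov : i ≤ (U' ∩ U).card := by
    have := Finset.card_le_card (Finset.subset_inter hdU' hdU)
    omega
  have heq : U' = U := IsIsolatedClique.eq_of_overlap (e := e) (e' := e) hik hi hm
    (fun d' hd' _ => Function.update_of_ne hd' _ _) hU' hU hGU' hGU hov
  subst heq
  have h1 := hGU' e he
  have h2 := hGU e he
  rw [Function.update_self] at h1
  rw [← h2] at h1
  revert h1
  cases G e <;> simp

/-- The clique size, of order `v ^ t`. -/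
noncomputable def cliqueSize (k : ℕ) (t : ℝ) (v : ℕ) : ℕ := ⌈(v : ℝ) ^ t / 4⌉₊ + k + 2

theorem pow_sub_le_factorial_mul_choose (n r : ℕ) : (n + 1 - r) ^ r ≤ r.factorial * n.choose r := by
  rw [← Nat.descFactorial_eq_factorial_mul_choose]
  exact Nat.pow_sub_le_descFactorial n r

theorem stmt0 (k i : ℕ) (hk : 3 ≤ k) (hi1 : 1 ≤ i) (hik : i < k)
    (t : ℝ) (ht0 : 0 ≤ t) (ht1 : t ≤ 1) :
    ∃ f : (v : ℕ) → (HGraph v k → Bool),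
      (∀ v, IsHypergraphProperty (f v)) ∧
      ∃ C c' C' : ℝ, 0 < C ∧ 0 < c' ∧ 0 < C' ∧ ∃ v₀ : ℕ, ∀ v : ℕ, v₀ ≤ v →
        (sensOn false (f v) : ℝ) ≤ C * (v : ℝ) ^ ((i : ℝ) * (1 - t)) ∧
        c' * (v : ℝ) ^ ((k : ℝ) - (i : ℝ) * (1 - t)) ≤ (sensOn true (f v) : ℝ) ∧
        (sensOn true (f v) : ℝ) ≤ C' * (v : ℝ) ^ ((k : ℝ) - (i : ℝ) * (1 - t)) := by
  refine ⟨fun v => hasIsolatedClique i (cliqueSize k t v),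
    fun v => isHypergraphProperty_hasIsolatedClique v k i _,
    4 ^ i, 1 / (i.factorial * (k - i).factorial * 4 ^ i * 4 ^ (k - i)), (k + 4) ^ i,
    by positivity, by positivity, by positivity, 4 * k + 6, fun v hv => ?_⟩
  have hvR : (4 * k + 6 : ℝ) ≤ v := by exact_mod_cast hv
  have hkR : (0 : ℝ) ≤ k := k.cast_nonneg
  have hv0 : (0 : ℝ) < v := by linarith
  have hv1 : (1 : ℝ) ≤ v := by linarith
  set x : ℝ := (v : ℝ) ^ t with hx
  have hx1 : 1 ≤ x := Real.one_le_rpow hv1 ht0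
  have hxv : x ≤ v := by simpa using Real.rpow_le_rpow_of_exponent_le hv1 ht1
  set m := cliqueSize k t v with hmdef
  have hmk : k + 2 ≤ m := by
    simp only [hmdef, cliqueSize]
    omega
  have hmR : (m : ℝ) = (⌈x / 4⌉₊ : ℝ) + k + 2 := by
    simp [hmdef, cliqueSize, hx]
  have hm_lower : x / 4 + k + 2 ≤ m := by
    rw [hmR]
    linarith [Nat.le_ceil (x / 4)]
  have hm_upper : (m : ℝ) ≤ x / 4 + k + 3 := by
    rw [hmR]
    linarith [Nat.ceil_lt_add_one (show 0 ≤ x / 4 by linarith)]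
  have hmv : m ≤ v := by
    have : (m : ℝ) ≤ v := by linarith
    exact_mod_cast this
  have hxi : x ^ i = (v : ℝ) ^ (i * t) := by
    rw [hx, ← Real.rpow_natCast, ← Real.rpow_mul hv0.le, mul_comm]
  have hpow_false : (v : ℝ) ^ ((i : ℝ) * (1 - t)) * x ^ i = (v : ℝ) ^ i := by
    rw [hxi, ← Real.rpow_add hv0, ← Real.rpow_natCast]
    congr 1
    ring
  have hpow_true : (v : ℝ) ^ ((k : ℝ) - (i : ℝ) * (1 - t)) = x ^ i * (v : ℝ) ^ (k - i) := by
    rw [hxi, ← Real.rpow_natCast, ← Real.rpow_add hv0, Nat.cast_sub hik.le]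
    congr 1
    ring
  have hchoose_m : (x / 4) ^ i ≤ i.factorial * (m.choose i : ℝ) := by
    have h : (((m + 1 - i : ℕ) : ℝ)) ^ i ≤ i.factorial * (m.choose i : ℝ) := by
      exact_mod_cast pow_sub_le_factorial_mul_choose m i
    refine le_trans (pow_le_pow_left₀ (by linarith) ?_ i) h
    rw [Nat.cast_sub (by omega)]
    have : (i : ℝ) ≤ k := by exact_mod_cast hik.le
    push_cast
    linarith
  have hchoose_v : ((v : ℝ) / 4) ^ (k - i) ≤
      (k - i).factorial * ((v - m).choose (k - i) : ℝ) := by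
    have h : (((v - m + 1 - (k - i) : ℕ) : ℝ)) ^ (k - i) ≤
        (k - i).factorial * ((v - m).choose (k - i) : ℝ) := by
      exact_mod_cast pow_sub_le_factorial_mul_choose (v - m) (k - i)
    refine le_trans (pow_le_pow_left₀ (by linarith) ?_ _) h
    have h1 : (v : ℝ) ≤ ((v - m + 1 - (k - i) : ℕ) : ℝ) + m + k := by
      have : v ≤ (v - m + 1 - (k - i)) + m + k := by omega
      exact_mod_cast this
    linarith
  refine ⟨?_, ?_, ?_⟩
  · set N := sensOn false (hasIsolatedClique i m : HGraph v k → Bool)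
    have h1 : (N : ℝ) * m.choose i ≤ v.choose i := by
      exact_mod_cast sensOn_false_mul_choose_le (v := v) hik hi1 hmk
    have h2 : (i.factorial : ℝ) * v.choose i ≤ (v : ℝ) ^ i := by
      rw [← Nat.cast_mul, ← Nat.descFactorial_eq_factorial_mul_choose]
      exact_mod_cast Nat.descFactorial_le_pow v i
    have h3 : (N : ℝ) * (x / 4) ^ i ≤ (v : ℝ) ^ i := by
      calc (N : ℝ) * (x / 4) ^ i ≤ N * (i.factorial * (m.choose i : ℝ)) := by gcongr
        _ = i.factorial * (N * m.choose i) := by ring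
        _ ≤ i.factorial * v.choose i := by gcongr
        _ ≤ _ := h2
    rw [← hpow_false] at h3
    refine le_of_mul_le_mul_right (h3.trans_eq ?_) (show 0 < (x / 4) ^ i by positivity)
    rw [div_pow]
    field_simp
  · have h1 : (m.choose i : ℝ) * (v - m).choose (k - i) ≤
        sensOn true (hasIsolatedClique i m : HGraph v k → Bool) := by
      exact_mod_cast le_sensOn_true hik hi1 hmk hmv
    refine le_trans ?_ h1
    have h2 := mul_le_mul hchoose_m hchoose_v (by positivity) (by positivity)
    rw [hpow_true, one_div, inv_mul_le_iff₀ (by positivity)]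
    rw [div_pow, div_pow, div_mul_div_comm, div_le_iff₀ (by positivity)] at h2
    exact h2.trans_eq (by ring)
  · have h1 : (sensOn true (hasIsolatedClique i m : HGraph v k → Bool) : ℝ) ≤
        m.choose i * v.choose (k - i) := by
      exact_mod_cast sensOn_true_le
    have h2 : (m.choose i : ℝ) ≤ (m : ℝ) ^ i := by exact_mod_cast Nat.choose_le_pow m i
    have h3 : (v.choose (k - i) : ℝ) ≤ (v : ℝ) ^ (k - i) := by
      exact_mod_cast Nat.choose_le_pow v (k - i)
    have h4 : (m : ℝ) ≤ (k + 4) * x := by nlinarith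
    rw [hpow_true]
    calc _ ≤ (m.choose i : ℝ) * v.choose (k - i) := h1
      _ ≤ (m : ℝ) ^ i * (v : ℝ) ^ (k - i) := by gcongr
      _ ≤ ((k + 4) * x) ^ i * (v : ℝ) ^ (k - i) := by gcongr
      _ = _ := by rw [mul_pow, mul_assoc]
end

section
/- Fix integers k ≥ 2, m > k, and 1 ≤ i < k, let f be the (m,i)-isolated-clique property on v vertices, and let G be a k-uniform hypergraph on Fin v with f(G) = 0. If W is a sensitive tuple for G, then there is exactly one k-element set E of vertices such that flipping E in G makes W a witness. -/
open Finset

/-- `W` is a witness for the `(m,i)`-isolated-clique property in `G`: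
`W` is an `m`-set, every `k`-subset of `W` is an edge, and every edge not inside `W`
meets `W` in fewer than `i` vertices. -/
def IsWitness {v k : ℕ} (m i : ℕ) (G : HGraph v k) (W : Finset (Fin v)) : Prop :=
  W.card = m ∧
  (∀ E : KSet v k, E.1 ⊆ W → G E = true) ∧
  (∀ E : KSet v k, G E = true → ¬ E.1 ⊆ W → (E.1 ∩ W).card < i)

/-- The `(m,i)`-isolated-clique property. -/
noncomputable def isoCliqueProp (v k m i : ℕ) : HGraph v k → Bool :=
  fun G => @decide (∃ W : Finset (Fin v), IsWitness m i G W) (Classical.propDecidable _)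

/-- An `m`-set `W` is a sensitive tuple for `G` if flipping a single `k`-set makes `W`
a witness. -/
def SensitiveTuple {v k : ℕ} (m i : ℕ) (G : HGraph v k) (W : Finset (Fin v)) : Prop :=
  W.card = m ∧ ∃ E : KSet v k, IsWitness m i (Function.update G E (!G E)) W

/-- Being a witness is decided edge by edge: if `W` is a witness in two hypergraphs obtained from
`G` by modifying distinct `k`-sets, it is already a witness in `G`. -/
theorem IsWitness.of_update_of_ne {v k m i : ℕ} {G : HGraph v k} {W : Finset (Fin v)}
    {E F : KSet v k} {a b : Bool} (hEF : E ≠ F)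
    (hE : IsWitness m i (Function.update G E a) W)
    (hF : IsWitness m i (Function.update G F b) W) : IsWitness m i G W := by
  refine ⟨hE.1, fun S hS => ?_, fun S hGS hS => ?_⟩
  · by_cases h : S = E
    · have hSF : S ≠ F := h ▸ hEF
      simpa [Function.update_of_ne hSF] using hF.2.1 S hS
    · simpa [Function.update_of_ne h] using hE.2.1 S hS
  · by_cases h : S = E
    · have hSF : S ≠ F := h ▸ hEF
      exact hF.2.2 S (by rwa [Function.update_of_ne hSF]) hS
    · exact hE.2.2 S (by rwa [Function.update_of_ne h]) hS

theorem stmt1 (v k m i : ℕ) (hk : 2 ≤ k) (hm : k < m) (hi1 : 1 ≤ i) (hik : i < k)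
    (G : HGraph v k) (hG : isoCliqueProp v k m i G = false)
    (W : Finset (Fin v)) (hW : SensitiveTuple m i G W) :
    ∃! E : KSet v k, IsWitness m i (Function.update G E (!G E)) W := by
  obtain ⟨-, E, hE⟩ := hW
  refine ⟨E, hE, fun F hF => ?_⟩
  by_contra hFE
  have hnot : ¬ ∃ W : Finset (Fin v), IsWitness m i G W := by
    simpa only [isoCliqueProp, decide_eq_false_iff_not] using hG
  exact hnot ⟨W, hF.of_update_of_ne hFE hE⟩
end

section
/- Fix integers k ≥ 2, m ≥ k + 3, and 1 ≤ i < k, let f be the (m,i)-isolated-clique property on v vertices, and let G be a k-uniform hypergraph on Fin v with f(G) = 0. If W₁ and W₂ are distinct sensitive tuples for G, then |W₁ ∩ W₂| < i. -/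
open Finset

/-- A `k`-subset `S` of `B` that crosses `A` (meets `A` in at least `i ≥ 1` vertices without being
contained in it) can be exchanged for another one through any given `a ∈ B \ S`. -/
lemma exists_crossing_exchange {α : Type*} [DecidableEq α] {A B S : Finset α} {i : ℕ} {a : α}
    (hi : 1 ≤ i) (hSB : S ⊆ B) (hSA : ¬ S ⊆ A) (hSi : i ≤ (S ∩ A).card)
    (haB : a ∈ B) (haS : a ∉ S) :
    ∃ T : Finset α, T.card = S.card ∧ T ⊆ B ∧ ¬ T ⊆ A ∧ i ≤ (T ∩ A).card ∧
      a ∈ T ∧ T ⊆ insert a S := by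
  obtain ⟨x, hxS, hxA⟩ := not_subset.1 hSA
  have hcard : ∀ y ∈ S, (insert a (S.erase y)).card = S.card := fun y hy => by
    rw [card_insert_of_notMem (by simp [haS]), card_erase_add_one hy]
  have hsub : ∀ y, insert a (S.erase y) ⊆ insert a S := fun y =>
    insert_subset_insert a (erase_subset y S)
  have hB : insert a S ⊆ B := insert_subset haB hSB
  by_cases haA : a ∈ A
  · obtain ⟨y, hy⟩ := card_pos.1 (hi.trans hSi)
    obtain ⟨hyS, hyA⟩ := mem_inter.1 hy
    refine ⟨insert a (S.erase y), hcard y hyS, (hsub y).trans hB, fun h => hxA (h ?_), ?_,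
      mem_insert_self _ _, hsub y⟩
    · exact mem_insert_of_mem (mem_erase.2 ⟨fun h => hxA (h ▸ hyA), hxS⟩)
    · rwa [insert_inter_of_mem haA, erase_inter, card_insert_of_notMem (by simp [haS]),
        card_erase_add_one hy]
  · refine ⟨insert a (S.erase x), hcard x hxS, (hsub x).trans hB,
      fun h => haA (h (mem_insert_self _ _)), ?_, mem_insert_self _ _, hsub x⟩
    rwa [insert_inter_of_notMem haA, erase_inter, erase_eq_of_notMem (by simp [hxA])]

/-- If `A ∩ B` has at least `i ≥ 1` elements, `B ⊄ A` and `|B| ≥ k + 2`, then any two `k`-sets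
are avoided by some `k`-subset of `B` that crosses `A`. -/
lemma exists_crossing_ne_ne {α : Type*} [DecidableEq α] {A B : Finset α} {k i : ℕ}
    (hi : 1 ≤ i) (hik : i < k) (hB : k + 2 ≤ B.card) (hBA : ¬ B ⊆ A)
    (hAB : i ≤ (A ∩ B).card) (P Q : Finset α) :
    ∃ S : Finset α, S.card = k ∧ S ⊆ B ∧ ¬ S ⊆ A ∧ i ≤ (S ∩ A).card ∧ S ≠ P ∧ S ≠ Q := by
  obtain ⟨x, hxB, hxA⟩ := not_subset.1 hBA
  obtain ⟨R, hR, hRi⟩ := exists_subset_card_eq hAB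
  obtain ⟨S, hRS, hSB, hSk⟩ := exists_subsuperset_card_eq (s := insert x R) (t := B) (n := k)
    (insert_subset hxB (hR.trans inter_subset_right))
    ((card_insert_le x R).trans (by omega)) (by omega)
  have hSA : ¬ S ⊆ A := fun h => hxA (h (hRS (mem_insert_self _ _)))
  have hSi : i ≤ (S ∩ A).card := hRi ▸ card_le_card
    (subset_inter ((subset_insert x R).trans hRS) (hR.trans inter_subset_left))
  have hdiff : 1 < (B \ S).card := by
    rw [card_sdiff_of_subset hSB]
    omega
  obtain ⟨a, ha, b, hb, hab⟩ := one_lt_card.1 hdiff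
  rw [mem_sdiff] at ha hb
  obtain ⟨Sa, hak, haB, haA, hai, haa, -⟩ :=
    exists_crossing_exchange hi hSB hSA hSi ha.1 ha.2
  obtain ⟨Sb, hbk, hbB, hbA, hbi, hbb, hbS⟩ :=
    exists_crossing_exchange hi hSB hSA hSi hb.1 hb.2
  have hSa : Sa ≠ S := fun h => ha.2 (h ▸ haa)
  have hSb : Sb ≠ S := fun h => hb.2 (h ▸ hbb)
  have hSab : Sa ≠ Sb := fun h =>
    (mem_insert.1 (hbS (h ▸ haa))).elim hab ha.2
  by_contra! hcon
  have h0 := hcon S hSk hSB hSA hSi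
  have h1 := hcon Sa (hak.trans hSk) haB haA hai
  have h2 := hcon Sb (hbk.trans hSk) hbB hbA hbi
  clear * - h0 h1 h2 hSa hSb hSab
  by_cases hP : S = P <;> by_cases hP' : Sa = P <;> simp_all

theorem stmt2 (v k m i : ℕ) (hk : 2 ≤ k) (hm : k + 3 ≤ m) (hi1 : 1 ≤ i) (hik : i < k)
    (G : HGraph v k) (hG : isoCliqueProp v k m i G = false)
    (W₁ W₂ : Finset (Fin v)) (h₁ : SensitiveTuple m i G W₁) (h₂ : SensitiveTuple m i G W₂)
    (hne : W₁ ≠ W₂) :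
    (W₁ ∩ W₂).card < i := by
  obtain ⟨hW₁, E₁, -, -, hisolated⟩ := h₁
  obtain ⟨hW₂, E₂, -, hclique, -⟩ := h₂
  by_contra! hcon
  have hsub : ¬ W₂ ⊆ W₁ := fun h => hne (eq_of_subset_of_card_le h (by omega)).symm
  obtain ⟨S, hSk, hS₂, hS₁, hSi, hSE₁, hSE₂⟩ :=
    exists_crossing_ne_ne hi1 hik (by omega) hsub hcon E₁.1 E₂.1
  have hedge := hclique ⟨S, hSk⟩ hS₂
  rw [Function.update_of_ne fun h => hSE₂ (congrArg Subtype.val h)] at hedge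
  refine (hisolated ⟨S, hSk⟩ ?_ hS₁).not_ge hSi
  rwa [Function.update_of_ne fun h => hSE₁ (congrArg Subtype.val h)]
end

section
/- Let 1 ≤ i ≤ m ≤ v be integers and let F be a family of m-element subsets of Fin v such that any two distinct members of F intersect in fewer than i elements. Then |F| ≤ C(v,i) / C(m,i), where C(a,b) denotes the binomial coefficient. -/
/-- The `i`-element subsets of two finsets meeting in fewer than `i` elements are disjoint. -/
theorem Finset.disjoint_powersetCard_of_card_inter_lt {α : Type*} [DecidableEq α]
    {A B : Finset α} {i : ℕ} (h : (A ∩ B).card < i) :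
    Disjoint (A.powersetCard i) (B.powersetCard i) := by
  rw [Finset.disjoint_left]
  intro S hSA hSB
  rw [Finset.mem_powersetCard] at hSA hSB
  have hle := Finset.card_le_card (Finset.subset_inter hSA.1 hSB.1)
  omega

/-- Packing bound: in a family of `m`-sets meeting pairwise in fewer than `i` elements, every
`i`-set lies in at most one member. -/
theorem Finset.card_mul_choose_le_choose_of_card_inter_lt {α : Type*} [Fintype α] [DecidableEq α]
    {m i : ℕ} {F : Finset (Finset α)} (hcard : ∀ A ∈ F, A.card = m)
    (hint : ∀ A ∈ F, ∀ B ∈ F, A ≠ B → (A ∩ B).card < i) :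
    F.card * m.choose i ≤ (Fintype.card α).choose i := by
  calc F.card * m.choose i = ∑ A ∈ F, (A.powersetCard i).card := by
        rw [Finset.sum_congr rfl fun A hA => by rw [Finset.card_powersetCard, hcard A hA],
          Finset.sum_const, smul_eq_mul]
    _ = (F.biUnion fun A => A.powersetCard i).card :=
        (Finset.card_biUnion fun A hA B hB hAB =>
          Finset.disjoint_powersetCard_of_card_inter_lt (hint A hA B hB hAB)).symm
    _ ≤ ((Finset.univ : Finset α).powersetCard i).card :=
        Finset.card_le_card <| Finset.biUnion_subset.2 fun A _ =>
          Finset.powersetCard_mono (Finset.subset_univ A)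
    _ = (Fintype.card α).choose i := by rw [Finset.card_powersetCard, Finset.card_univ]

theorem stmt3 (v m i : ℕ) (hi1 : 1 ≤ i) (him : i ≤ m) (hmv : m ≤ v)
    (F : Finset (Finset (Fin v)))
    (hcard : ∀ A ∈ F, A.card = m)
    (hint : ∀ A ∈ F, ∀ B ∈ F, A ≠ B → (A ∩ B).card < i) :
    (F.card : ℝ) ≤ (Nat.choose v i : ℝ) / (Nat.choose m i : ℝ) := by
  rw [le_div_iff₀ (by exact_mod_cast Nat.choose_pos him)]
  have h := Finset.card_mul_choose_le_choose_of_card_inter_lt hcard hint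
  rw [Fintype.card_fin] at h
  exact_mod_cast h
end

section
/- Let q be a prime power, let d and ℓ be natural numbers with d ≤ q. Then there exists a family of q^{dℓ} subsets S₁, ..., S_{q^{dℓ}} of a set of size q^{ℓ+1} such that |S_j| = q for every j and |S_j ∩ S_{j'}| < d for all j ≠ j'. -/
open Polynomial in
/-- The graph `{(x, f₁(x), ..., f_ℓ(x))}` of a tuple of polynomials over a finite field. -/
def polyGraph {F ι : Type*} [Field F] [Fintype F] (f : ι → F[X]) : Finset (F × (ι → F)) :=
  Finset.univ.map ⟨fun x => (x, fun i => (f i).eval x), fun _ _ h => congrArg Prod.fst h⟩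

open Polynomial in
theorem card_polyGraph {F ι : Type*} [Field F] [Fintype F] (f : ι → F[X]) :
    (polyGraph f).card = Fintype.card F := by
  simp [polyGraph]

open Polynomial in
theorem mem_polyGraph {F ι : Type*} [Field F] [Fintype F] {f : ι → F[X]} {y : F × (ι → F)} :
    y ∈ polyGraph f ↔ ∀ i, (f i).eval y.1 = y.2 i := by
  refine Finset.mem_map.trans ⟨?_, fun h => ⟨y.1, Finset.mem_univ _, Prod.ext rfl (funext h)⟩⟩
  rintro ⟨x, -, rfl⟩ i
  rfl

open Polynomial in
/-- Graphs of distinct tuples of polynomials of degree less than `d` meet in fewer than `d`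
points. -/
theorem card_polyGraph_inter_lt {F ι : Type*} [Field F] [Fintype F] [DecidableEq (F × (ι → F))]
    {d : ℕ} {f g : ι → F[X]} (hf : ∀ i, (f i).degree < d) (hg : ∀ i, (g i).degree < d)
    (hfg : f ≠ g) : (polyGraph f ∩ polyGraph g).card < d := by
  classical
  by_contra! hcard
  refine hfg (funext fun i => ?_)
  have hinj : Set.InjOn (Prod.fst : F × (ι → F) → F) ↑(polyGraph f ∩ polyGraph g) := by
    intro y hy z hz hyz
    simp only [Finset.coe_inter, Set.mem_inter_iff, Finset.mem_coe, mem_polyGraph] at hy hz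
    exact Prod.ext hyz (funext fun j => by rw [← hy.1 j, ← hz.1 j, hyz])
  have hle : (d : WithBot ℕ) ≤ ((polyGraph f ∩ polyGraph g).image Prod.fst).card := by
    rw [Finset.card_image_of_injOn hinj]
    exact_mod_cast hcard
  refine eq_of_degrees_lt_of_eval_finset_eq _ ((hf i).trans_le hle) ((hg i).trans_le hle) ?_
  intro x hx
  obtain ⟨y, hy, rfl⟩ := Finset.mem_image.1 hx
  simp only [Finset.mem_inter, mem_polyGraph] at hy
  rw [hy.1 i, hy.2 i]

theorem stmt4 (q d ℓ : ℕ) (hq : IsPrimePow q) (hd : d ≤ q) :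
    ∃ S : Fin (q ^ (d * ℓ)) → Finset (Fin (q ^ (ℓ + 1))),
      (∀ j, (S j).card = q) ∧
      ∀ j j', j ≠ j' → ((S j) ∩ (S j')).card < d := by
  classical
  obtain ⟨F, _, _, hF⟩ : ∃ (F : Type) (_ : Field F) (_ : Fintype F), Fintype.card F = q := by
    obtain ⟨p, k, hp, hk, rfl⟩ := hq
    have : Fact p.Prime := ⟨hp.nat_prime⟩
    let _ := Fintype.ofFinite (GaloisField p k)
    exact ⟨GaloisField p k, inferInstance, inferInstance, by
      rw [← Nat.card_eq_fintype_card, GaloisField.card p k hk.ne']⟩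
  let points : F × (Fin ℓ → F) ≃ Fin (q ^ (ℓ + 1)) :=
    Fintype.equivFinOfCardEq (by simp [hF, pow_succ'])
  let coeffs : Fin (q ^ (d * ℓ)) ≃ (Fin ℓ → Fin d → F) :=
    (Fintype.equivFinOfCardEq (by simp [hF, pow_mul])).symm
  let poly : Fin (q ^ (d * ℓ)) → Fin ℓ → Polynomial F := fun j i =>
    ((Polynomial.degreeLTEquiv F d).symm (coeffs j i) : Polynomial.degreeLT F d)
  have hdeg : ∀ j i, (poly j i).degree < d := fun j i =>
    Polynomial.mem_degreeLT.1 (Subtype.property _)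
  have hinj : Function.Injective poly := fun j j' h =>
    coeffs.injective <| funext fun i =>
      (Polynomial.degreeLTEquiv F d).symm.injective (Subtype.ext (congrFun h i))
  refine ⟨fun j => (polyGraph (poly j)).map points.toEmbedding, fun j => ?_, fun j j' hj => ?_⟩
  · rw [Finset.card_map, card_polyGraph, hF]
  · rw [← Finset.map_inter, Finset.card_map]
    exact card_polyGraph_inter_lt (hdeg j) (hdeg j') (hinj.ne hj)
end

section
/- For each v, let f_v be the isolated-triangle property on v vertices. Then there exist constants c, C > 0 and v₀ ∈ ℕ such that for all v ≥ v₀: c·v ≤ s(f_v) ≤ C·v and c·v² ≤ bs(f_v) ≤ C·v²; that is, s(f_v) = Θ(v) and bs(f_v) = Θ(v²). -/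
open Finset

/-- `T` is an isolated triangle in the graph `G`: `T` has three vertices, all edges
inside `T` are present, and no edge of `G` joins `T` to a vertex outside `T`. -/
def IsIsolatedTriangle {v : ℕ} (G : HGraph v 2) (T : Finset (Fin v)) : Prop :=
  T.card = 3 ∧
  (∀ E : KSet v 2, E.1 ⊆ T → G E = true) ∧
  (∀ E : KSet v 2, G E = true → ¬ E.1 ⊆ T → E.1 ∩ T = ∅)

/-- The isolated-triangle graph property. -/
noncomputable def isoTriangleProp (v : ℕ) : HGraph v 2 → Bool :=
  fun G => @decide (∃ T : Finset (Fin v), IsIsolatedTriangle G T) (Classical.propDecidable _)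

/-- The edge joining two distinct vertices. -/
def edge {v : ℕ} {a b : Fin v} (h : a ≠ b) : KSet v 2 := ⟨{a, b}, Finset.card_pair h⟩

lemma isIsolatedTriangle_iff {v : ℕ} {G : HGraph v 2} {T : Finset (Fin v)} :
    IsIsolatedTriangle G T ↔
      T.card = 3 ∧ ∀ E : KSet v 2, (E.1 ∩ T).Nonempty → (G E = true ↔ E.1 ⊆ T) := by
  constructor
  · rintro ⟨h3, hin, hout⟩
    refine ⟨h3, fun E hE => ⟨fun hG => ?_, hin E⟩⟩
    by_contra hsub
    exact hE.ne_empty (hout E hG hsub)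
  · rintro ⟨h3, h⟩
    refine ⟨h3, fun E hE => (h E ?_).2 hE, fun E hG hsub => ?_⟩
    · rw [Finset.inter_eq_left.2 hE, ← Finset.card_pos, E.2]
      norm_num
    · by_contra hne
      exact hsub ((h E (Finset.nonempty_iff_ne_empty.2 hne)).1 hG)

lemma isoTriangleProp_eq_true {v : ℕ} {G : HGraph v 2} :
    isoTriangleProp v G = true ↔ ∃ T, IsIsolatedTriangle G T := by
  simp [isoTriangleProp]

lemma isoTriangleProp_eq_false {v : ℕ} {G : HGraph v 2} :
    isoTriangleProp v G = false ↔ ¬ ∃ T, IsIsolatedTriangle G T := by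
  simp [isoTriangleProp]

/-- An isolated triangle survives changes of edges that do not meet it. -/
lemma IsIsolatedTriangle.congr {v : ℕ} {G H : HGraph v 2} {T : Finset (Fin v)}
    (hT : IsIsolatedTriangle G T) (h : ∀ E : KSet v 2, (E.1 ∩ T).Nonempty → H E = G E) :
    IsIsolatedTriangle H T := by
  rw [isIsolatedTriangle_iff] at hT ⊢
  exact ⟨hT.1, fun E hE => by rw [h E hE, hT.2 E hE]⟩

/-- An isolated triangle consists of any of its vertices and the neighbours of that vertex. -/
lemma IsIsolatedTriangle.mem_iff {v : ℕ} {G : HGraph v 2} {T : Finset (Fin v)}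
    (hT : IsIsolatedTriangle G T) {b u : Fin v} (hb : b ∈ T) (hbu : b ≠ u) :
    u ∈ T ↔ G (edge hbu) = true := by
  rw [(isIsolatedTriangle_iff.1 hT).2 (edge hbu) ⟨b, by simp [edge, hb]⟩]
  simp [edge, Finset.insert_subset_iff, hb]

lemma localSens_le_of_eq_true {v : ℕ} {x : HGraph v 2} (hx : isoTriangleProp v x = true) :
    localSens (isoTriangleProp v) x ≤ 3 * v := by
  obtain ⟨T, hT⟩ := isoTriangleProp_eq_true.1 hx
  have hcard : ((T ×ˢ (univ : Finset (Fin v))).image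
      (fun p => ({p.1, p.2} : Finset (Fin v)))).card ≤ 3 * v := by
    refine Finset.card_image_le.trans ?_
    simp [hT.1]
  refine le_trans ?_ hcard
  refine Finset.card_le_card_of_injOn Subtype.val ?_ Subtype.val_injective.injOn
  intro E hE
  simp only [Finset.coe_filter, Finset.mem_univ, true_and, Set.mem_ofPred_eq] at hE
  have hmeet : (E.1 ∩ T).Nonempty := by
    by_contra hdisj
    refine hE ?_
    rw [hx, isoTriangleProp_eq_true]
    refine ⟨T, hT.congr fun E' hE' => ?_⟩
    have : E' ≠ E := by
      rintro rfl
      exact hdisj hE'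
    simp [this]
  obtain ⟨a, ha⟩ := hmeet
  rw [Finset.mem_inter] at ha
  obtain ⟨p, q, -, hpq⟩ := Finset.card_eq_two.1 E.2
  rw [hpq, Finset.mem_insert, Finset.mem_singleton] at ha
  simp only [Finset.coe_image, Set.mem_image, Finset.mem_coe, Finset.mem_product,
    Finset.mem_univ, and_true, Prod.exists]
  rcases ha with ⟨rfl | rfl, haT⟩
  · exact ⟨a, q, haT, hpq.symm⟩
  · exact ⟨a, p, haT, by rw [hpq, Finset.pair_comm]⟩

/-- On a graph without isolated triangles, a sensitive edge is determined by any vertex of the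
triangle it isolates that does not lie on that edge. -/
lemma localSens_le_of_eq_false {v : ℕ} {x : HGraph v 2} (hx : isoTriangleProp v x = false) :
    localSens (isoTriangleProp v) x ≤ v := by
  have hno := isoTriangleProp_eq_false.1 hx
  conv_rhs => rw [← Fintype.card_fin v, ← Finset.card_univ]
  refine Finset.card_le_card_of_forall_subsingleton
    (fun E b => ∃ T, IsIsolatedTriangle (Function.update x E (!x E)) T ∧ b ∈ T ∧ b ∉ E.1) ?_ ?_
  · intro E hE
    simp only [Finset.mem_filter, Finset.mem_univ, true_and, hx, ne_eq, Bool.not_eq_false] at hE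
    obtain ⟨T, hT⟩ := isoTriangleProp_eq_true.1 hE
    obtain ⟨b, hbT, hbE⟩ : ∃ b ∈ T, b ∉ E.1 :=
      Finset.exists_mem_notMem_of_card_lt_card (by rw [E.2, hT.1]; norm_num)
    exact ⟨b, Finset.mem_univ b, T, hT, hbT, hbE⟩
  · rintro b - E ⟨-, T, hT, hbT, hbE⟩ E' ⟨-, T', hT', hbT', hbE'⟩
    have hTT' : T = T' := by
      ext u
      by_cases hbu : b = u
      · subst hbu
        simp [hbT, hbT']
      · rw [hT.mem_iff hbT hbu, hT'.mem_iff hbT' hbu]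
        have h1 : edge hbu ≠ E := by
          rintro rfl
          simp [edge] at hbE
        have h2 : edge hbu ≠ E' := by
          rintro rfl
          simp [edge] at hbE'
        simp [h1, h2]
    subst hTT'
    by_contra hne
    have hmeet : (E.1 ∩ T).Nonempty := by
      by_contra hdisj
      refine hno ⟨T, hT.congr fun F hF => ?_⟩
      have : F ≠ E := by
        rintro rfl
        exact hdisj hF
      simp [this]
    have h1 := (isIsolatedTriangle_iff.1 hT).2 E hmeet
    have h2 := (isIsolatedTriangle_iff.1 hT').2 E hmeet
    rw [← h2] at h1
    simp [hne] at h1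

lemma sens_isoTriangleProp_le (v : ℕ) : sens (isoTriangleProp v) ≤ 3 * v := by
  refine Finset.sup_le fun x _ => ?_
  cases hx : isoTriangleProp v x
  · exact (localSens_le_of_eq_false hx).trans (by omega)
  · exact localSens_le_of_eq_true hx

/-- The graph whose edges are those inside the vertex set `T`. -/
def cliqueOn {v : ℕ} (T : Finset (Fin v)) : HGraph v 2 := fun E => decide (E.1 ⊆ T)

lemma isIsolatedTriangle_cliqueOn {v : ℕ} {T : Finset (Fin v)} (hT : T.card = 3) :
    IsIsolatedTriangle (cliqueOn T) T :=
  isIsolatedTriangle_iff.2 ⟨hT, fun E _ => by simp [cliqueOn]⟩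

/-- Attaching a pendant edge to a triangle leaves no isolated triangle. -/
lemma isoTriangleProp_update_cliqueOn {v : ℕ} {T : Finset (Fin v)} (hT : T.card = 3)
    {E : KSet v 2} (hmeet : (E.1 ∩ T).Nonempty) (hE : ¬ E.1 ⊆ T) :
    isoTriangleProp v (Function.update (cliqueOn T) E true) = false := by
  rw [isoTriangleProp_eq_false]
  rintro ⟨S, hS⟩
  have hST : S ⊆ T := by
    intro w hw
    by_contra hwT
    have key : ∀ u ∈ S, u ≠ w → E.1 = {w, u} := by
      intro u hu huw
      have h := (hS.mem_iff hw huw.symm).1 hu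
      by_cases hEw : edge huw.symm = E
      · rw [← hEw, edge]
      · rw [Function.update_of_ne hEw] at h
        simp [cliqueOn, edge, Finset.insert_subset_iff, hwT] at h
    have hSE : S ⊆ E.1 := by
      intro u hu
      by_cases huw : u = w
      · obtain ⟨z, hz, hzw⟩ := Finset.exists_mem_ne (by rw [hS.1]; norm_num) w
        simp [key z hz hzw, huw]
      · simp [key u hu huw]
    have hle := Finset.card_le_card hSE
    rw [hS.1, E.2] at hle
    omega
  have hEq : S = T := Finset.eq_of_subset_of_card_le hST (by rw [hS.1, hT])
  subst hEq
  exact hE (((isIsolatedTriangle_iff.1 hS).2 E hmeet).1 (by simp))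

lemma le_sens_isoTriangleProp {v : ℕ} (hv : 3 ≤ v) : v - 3 ≤ sens (isoTriangleProp v) := by
  obtain ⟨T, -, hT⟩ := Finset.exists_subset_card_eq
    (s := (univ : Finset (Fin v))) (n := 3) (by simpa using hv)
  obtain ⟨a, ha⟩ : T.Nonempty := by
    rw [← Finset.card_pos, hT]
    norm_num
  have htrue : isoTriangleProp v (cliqueOn T) = true :=
    isoTriangleProp_eq_true.2 ⟨T, isIsolatedTriangle_cliqueOn hT⟩
  refine le_trans ?_ (Finset.le_sup (Finset.mem_univ (cliqueOn T)))
  have hcard : Tᶜ.card = v - 3 := by rw [Finset.card_compl, hT, Fintype.card_fin]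
  rw [← hcard, localSens]
  refine Finset.card_le_card_of_forall_subsingleton (fun u E => E.1 = {a, u}) ?_ ?_
  · intro u hu
    rw [Finset.mem_compl] at hu
    have hau : a ≠ u := by
      rintro rfl
      exact hu ha
    have hsub : ¬ (edge hau).1 ⊆ T := by simp [edge, Finset.insert_subset_iff, hu]
    refine ⟨edge hau, ?_, rfl⟩
    have hflip : (!cliqueOn T (edge hau)) = true := by simp [cliqueOn, hsub]
    rw [Finset.mem_filter, hflip, htrue,
      isoTriangleProp_update_cliqueOn hT ⟨a, by simp [edge, ha]⟩ hsub]
    simp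
  · rintro E - u ⟨hu, hEu⟩ w ⟨hw, hEw⟩
    have hmem : u ∈ ({a, w} : Finset (Fin v)) := by
      rw [← hEw, hEu]
      simp
    rw [Finset.mem_insert, Finset.mem_singleton] at hmem
    rcases hmem with rfl | rfl
    · exact absurd ha (Finset.mem_compl.1 hu)
    · rfl

/-- Disjoint sensitive blocks are nonempty, so there are at most as many as coordinates. -/
lemma card_sensitive_blocks_le {I : Type} [Fintype I] [DecidableEq I] {f : (I → Bool) → Bool}
    {x : I → Bool} {n : ℕ} {B : Fin n → Finset I} (hB : ∀ j, f (flipBlock x (B j)) ≠ f x)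
    (hdisj : ∀ j j', j ≠ j' → Disjoint (B j) (B j')) : n ≤ Fintype.card I := by
  have hne : ∀ j, (B j).Nonempty := by
    intro j
    by_contra h
    rw [Finset.not_nonempty_iff_eq_empty] at h
    refine hB j ?_
    rw [h]
    congr 1
  choose g hg using hne
  have hinj : Function.Injective g := by
    intro j j' h
    by_contra hjj'
    exact Finset.disjoint_left.1 (hdisj j j' hjj') (hg j) (h ▸ hg j')
  simpa using Fintype.card_le_of_injective g hinj

lemma blockSens_le_card {I : Type} [Fintype I] [DecidableEq I] (f : (I → Bool) → Bool) :
    blockSens f ≤ Fintype.card I := by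
  refine Finset.sup_le fun x _ => csSup_le' ?_
  rintro n ⟨B, hB, hdisj⟩
  exact card_sensitive_blocks_le hB hdisj

lemma le_blockSens {I : Type} [Fintype I] [DecidableEq I] {f : (I → Bool) → Bool}
    {x : I → Bool} {n : ℕ} {B : Fin n → Finset I} (hB : ∀ j, f (flipBlock x (B j)) ≠ f x)
    (hdisj : ∀ j j', j ≠ j' → Disjoint (B j) (B j')) : n ≤ blockSens f := by
  refine le_trans ?_ (Finset.le_sup (Finset.mem_univ x))
  refine le_csSup ⟨Fintype.card I, ?_⟩ ⟨B, hB, hdisj⟩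
  rintro m ⟨B', hB', hdisj'⟩
  exact card_sensitive_blocks_le hB' hdisj'

lemma blockSens_isoTriangleProp_le (v : ℕ) : blockSens (isoTriangleProp v) ≤ v ^ 2 := by
  refine (blockSens_le_card _).trans ?_
  rw [Fintype.card_finset_len, Fintype.card_fin]
  exact Nat.choose_le_pow v 2

/-- Edge-disjoint triangles are disjoint sensitive blocks of the empty graph. -/
lemma le_blockSens_of_edgeDisjoint {v n : ℕ} {T : Fin n → Finset (Fin v)}
    (hT : ∀ j, (T j).card = 3)
    (hdisj : ∀ j j', j ≠ j' → ∀ E : KSet v 2, E.1 ⊆ T j → ¬ E.1 ⊆ T j') :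
    n ≤ blockSens (isoTriangleProp v) := by
  refine le_blockSens (x := fun _ => false) (B := fun j => univ.filter fun E => E.1 ⊆ T j) ?_ ?_
  · intro j
    have hflip : flipBlock (fun _ => false) (univ.filter fun E : KSet v 2 => E.1 ⊆ T j)
        = cliqueOn (T j) := by
      ext E
      simp [flipBlock, cliqueOn]
    have hempty : isoTriangleProp v (fun _ => false) = false := by
      rw [isoTriangleProp_eq_false]
      rintro ⟨S, hS⟩
      obtain ⟨E, hES, hE⟩ := Finset.exists_subset_card_eq
        (s := S) (n := 2) (by rw [hS.1]; norm_num)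
      exact absurd (hS.2.1 ⟨E, hE⟩ hES) (by simp)
    rw [hflip, hempty, isoTriangleProp_eq_true.2 ⟨T j, isIsolatedTriangle_cliqueOn (hT j)⟩]
    simp
  · intro j j' hjj'
    rw [Finset.disjoint_filter]
    exact fun E _ => hdisj j j' hjj' E

/-- The triangles `{i, n + j, 2n + i + j}` with `i, j < n` are pairwise edge-disjoint. -/
lemma sq_le_blockSens {v n : ℕ} (hn : 4 * n ≤ v) : n ^ 2 ≤ blockSens (isoTriangleProp v) := by
  let t : Fin n × Fin n → Finset (Fin v) := fun p =>
    {⟨p.1, by omega⟩, ⟨n + p.2, by omega⟩, ⟨2 * n + p.1 + p.2, by omega⟩}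
  let e : Fin (n ^ 2) ≃ Fin n × Fin n := (finCongr (sq n)).trans finProdFinEquiv.symm
  refine le_blockSens_of_edgeDisjoint (T := fun k => t (e k)) ?_ ?_
  · intro k
    refine Finset.card_eq_three.2 ⟨_, _, _, ?_, ?_, ?_, rfl⟩ <;>
      simp only [ne_eq, Fin.mk.injEq] <;> omega
  · intro k k' hkk' E hE hE'
    refine hkk' (e.injective ?_)
    obtain ⟨a, b, hab, hEab⟩ := Finset.card_eq_two.1 E.2
    rw [hEab] at hE hE'
    generalize e k = p at hE
    generalize e k' = q at hE'
    obtain ⟨i, j⟩ := p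
    obtain ⟨i', j'⟩ := q
    simp only [t, Finset.insert_subset_iff, Finset.singleton_subset_iff, Finset.mem_insert,
      Finset.mem_singleton, Fin.ext_iff] at hE hE'
    rw [ne_eq, Fin.ext_iff] at hab
    rw [Prod.mk.injEq, Fin.ext_iff, Fin.ext_iff]
    omega

theorem stmt7 :
    ∃ c C : ℝ, 0 < c ∧ 0 < C ∧ ∃ v₀ : ℕ, ∀ v : ℕ, v₀ ≤ v →
      c * (v : ℝ) ≤ (sens (isoTriangleProp v) : ℝ) ∧
      (sens (isoTriangleProp v) : ℝ) ≤ C * (v : ℝ) ∧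
      c * (v : ℝ) ^ 2 ≤ (blockSens (isoTriangleProp v) : ℝ) ∧
      (blockSens (isoTriangleProp v) : ℝ) ≤ C * (v : ℝ) ^ 2 := by
  refine ⟨1 / 64, 3, by norm_num, by norm_num, 8, fun v hv => ⟨?_, ?_, ?_, ?_⟩⟩
  · have h : v ≤ 64 * sens (isoTriangleProp v) := by
      have := le_sens_isoTriangleProp (v := v) (by omega)
      omega
    have h' : (v : ℝ) ≤ 64 * (sens (isoTriangleProp v) : ℝ) := by exact_mod_cast h
    linarith
  · exact_mod_cast sens_isoTriangleProp_le v
  · have h : v ^ 2 ≤ 64 * blockSens (isoTriangleProp v) := by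
      calc v ^ 2 ≤ (8 * (v / 4)) ^ 2 := Nat.pow_le_pow_left (by omega) 2
        _ = 64 * (v / 4) ^ 2 := by ring
        _ ≤ _ := Nat.mul_le_mul_left 64 (sq_le_blockSens (by omega))
    have h' : (v : ℝ) ^ 2 ≤ 64 * (blockSens (isoTriangleProp v) : ℝ) := by exact_mod_cast h
    linarith
  · have h' : (blockSens (isoTriangleProp v) : ℝ) ≤ (v : ℝ) ^ 2 := by
      exact_mod_cast blockSens_isoTriangleProp_le v
    nlinarith [sq_nonneg (v : ℝ)]
end

section
/- Let G be a graph on v vertices containing no isolated triangle (i.e., f(G) = 0 for the isolated-triangle property f). Then any two distinct sensitive triples of G are vertex disjoint. -/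
open Finset

/-- `T` is a sensitive triple for `G`: flipping a single edge makes `T` an isolated
triangle. -/
def SensitiveTriple {v : ℕ} (G : HGraph v 2) (T : Finset (Fin v)) : Prop :=
  T.card = 3 ∧ ∃ e : KSet v 2, IsIsolatedTriangle (Function.update G e (!G e)) T

/-- A pair inside one sensitive triple which meets but is not contained in another one
must be flipped for one of the two triples. -/
lemma eq_or_eq_of_crossing {v : ℕ} {G : HGraph v 2} {S T : Finset (Fin v)} {d e : KSet v 2}
    (hS : IsIsolatedTriangle (Function.update G d (!G d)) S)
    (hT : IsIsolatedTriangle (Function.update G e (!G e)) T)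
    {a x : Fin v} (haS : a ∈ S) (haT : a ∈ T) (hxS : x ∈ S) (hxT : x ∉ T) :
    d.1 = {a, x} ∨ e.1 = {a, x} := by
  have hax : a ≠ x := fun h => hxT (h ▸ haT)
  by_contra! h
  let E : KSet v 2 := ⟨{a, x}, card_pair hax⟩
  have hd : E ≠ d := fun h' => h.1 (congrArg Subtype.val h').symm
  have he : E ≠ e := fun h' => h.2 (congrArg Subtype.val h').symm
  have hGE : G E = true := by
    simpa [Function.update_of_ne hd] using
      hS.2.1 E (by simp [E, insert_subset_iff, haS, hxS])
  have hdisj := hT.2.2 E (by simpa [Function.update_of_ne he] using hGE)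
    (by simp [E, insert_subset_iff, hxT])
  have haE : a ∈ E.1 ∩ T := by simp [E, haT]
  simp [hdisj] at haE

theorem stmt8 (v : ℕ) (G : HGraph v 2) (hG : isoTriangleProp v G = false)
    (T₁ T₂ : Finset (Fin v))
    (h₁ : SensitiveTriple G T₁) (h₂ : SensitiveTriple G T₂) (hne : T₁ ≠ T₂) :
    T₁ ∩ T₂ = ∅ := by
  obtain ⟨c₁, d, hd⟩ := h₁
  obtain ⟨c₂, e, he⟩ := h₂
  by_contra hinter
  obtain ⟨a, ha⟩ := nonempty_iff_ne_empty.mpr hinter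
  obtain ⟨ha₁, ha₂⟩ := mem_inter.mp ha
  obtain ⟨x, hx₁, hx₂⟩ := not_subset.mp fun h => hne (eq_of_subset_of_card_le h (by lia))
  obtain ⟨y, hy₂, hy₁⟩ := not_subset.mp fun h => hne (eq_of_subset_of_card_le h (by lia)).symm
  obtain ⟨z, hz₁, hz⟩ : ∃ z ∈ T₁, z ∉ ({a, x} : Finset (Fin v)) :=
    exists_mem_notMem_of_card_lt_card (card_le_two.trans_lt (by lia))
  have hax := eq_or_eq_of_crossing hd he ha₁ ha₂ hx₁ hx₂
  have hay := eq_or_eq_of_crossing he hd ha₂ ha₁ hy₂ hy₁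
  have hxy : ({a, y} : Finset (Fin v)) ≠ {a, x} :=
    ne_of_mem_of_not_mem' (a := y) (by simp) (by grind)
  by_cases hz₂ : z ∈ T₂
  · have hzx := eq_or_eq_of_crossing hd he hz₁ hz₂ hx₁ hx₂
    have hzax : ({z, x} : Finset (Fin v)) ≠ {a, x} :=
      ne_of_mem_of_not_mem' (a := z) (by simp) hz
    have hzay : ({z, x} : Finset (Fin v)) ≠ {a, y} :=
      ne_of_mem_of_not_mem' (a := x) (by simp) (by grind)
    grind only
  · have haz := eq_or_eq_of_crossing hd he ha₁ ha₂ hz₁ hz₂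
    have hzax : ({a, z} : Finset (Fin v)) ≠ {a, x} :=
      ne_of_mem_of_not_mem' (a := z) (by simp) hz
    have hzay : ({a, z} : Finset (Fin v)) ≠ {a, y} :=
      ne_of_mem_of_not_mem' (a := z) (by simp) (by grind)
    grind only
end
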